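/- For a central concircular tensor L = A + r ⊗ r^♭ on E^n_ν with A = diag(λ₁,…,λₙ) and metric g = diag(ε₁,…,εₙ), writing B(z) = det(zI − A) = Σ_{l=0}^{n} a_l z^l, the characteristic polynomial of L is p(z) = det(zI − L) = Σ_{l=0}^{n} ( a_l − Σ_{j=0}^{n−1−l} a_{j+1+l} ⟨r, Aʲ r⟩ ) z^l, where ⟨r, Aʲr⟩ = Σᵢ εᵢ λᵢʲ (xⁱ)². -/

import Mathlib

theorem aux_swap (n : ℕ) (a : ℕ → ℝ) (t z : ℝ) :
    ∑ l ∈ Finset.range (n + 1), ∑ j ∈ Finset.range (n - l), a (j + 1 + l) * (t ^ j * z ^ l)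
      = ∑ m ∈ Finset.range (n + 1), ∑ k ∈ Finset.range m, a m * (z ^ k * t ^ (m - 1 - k)) := by
  rw [Finset.sum_sigma', Finset.sum_sigma']
  refine Finset.sum_bij' (fun p _ => ⟨p.2 + 1 + p.1, p.1⟩) (fun p _ => ⟨p.2, p.1 - 1 - p.2⟩)
    ?_ ?_ ?_ ?_ ?_
  · rintro ⟨l, j⟩ h
    simp only [Finset.mem_sigma, Finset.mem_range] at h ⊢
    omega
  · rintro ⟨l, j⟩ h
    simp only [Finset.mem_sigma, Finset.mem_range] at h ⊢
    omega
  · rintro ⟨l, j⟩ h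
    simp only [Sigma.mk.injEq, heq_eq_eq, true_and]
    omega
  · rintro ⟨l, j⟩ h
    simp only [Finset.mem_sigma, Finset.mem_range] at h
    simp only [Sigma.mk.injEq, heq_eq_eq, and_true]
    omega
  · rintro ⟨l, j⟩ h
    have : j + 1 + l - 1 - l = j := by omega
    simp only [this]
    ring

theorem aux_quot {n : ℕ} (lam : Fin n → ℝ) (a : ℕ → ℝ)
    (ha : ∀ z : ℝ, (∏ i, (z - lam i)) = ∑ l ∈ Finset.range (n + 1), a l * z ^ l)
    (i : Fin n) (z : ℝ) :
    (∏ i, (z - lam i)) = (∑ l ∈ Finset.range (n + 1), ∑ j ∈ Finset.range (n - l),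
      a (j + 1 + l) * (lam i ^ j * z ^ l)) * (z - lam i) := by
  have h0 : (∏ k, (lam i - lam k)) = 0 :=
    Finset.prod_eq_zero (Finset.mem_univ i) (sub_self _)
  have h1 := ha (lam i)
  rw [h0] at h1
  rw [aux_swap, ha z, ← sub_zero (∑ l ∈ Finset.range (n + 1), a l * z ^ l), h1,
    ← Finset.sum_sub_distrib, Finset.sum_mul]
  refine Finset.sum_congr rfl fun m _ => ?_
  rw [← Finset.mul_sum, mul_assoc, (Commute.all z (lam i)).geom_sum₂_mul]
  ring

/-- Characteristic polynomial of a central concircular tensor in expanded form: if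
`B(z) = ∏ᵢ(z − λᵢ) = Σ_l a_l z^l`, then
`det(zI − L) = Σ_l ( a_l − Σ_{j=0}^{n−1−l} a_{j+1+l} ⟨r, Aʲ r⟩ ) z^l`,
where `⟨r, Aʲ r⟩ = Σᵢ εᵢ λᵢʲ (xⁱ)²`. -/
theorem stmt_7 {n : ℕ} (lam ε x : Fin n → ℝ) (hε : ∀ i, ε i = 1 ∨ ε i = -1)
    (a : ℕ → ℝ)
    (ha : ∀ z : ℝ, (∏ i, (z - lam i)) = ∑ l ∈ Finset.range (n + 1), a l * z ^ l) :
    ∀ z : ℝ,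
      (z • (1 : Matrix (Fin n) (Fin n) ℝ)
        - (Matrix.diagonal lam + Matrix.vecMulVec x (fun j => ε j * x j))).det
      = ∑ l ∈ Finset.range (n + 1),
          (a l - ∑ j ∈ Finset.range (n - l),
            a (j + 1 + l) * ∑ i, ε i * lam i ^ j * (x i) ^ 2) * z ^ l := by
  have key : Set.EqOn (fun z : ℝ => (z • (1 : Matrix (Fin n) (Fin n) ℝ)
        - (Matrix.diagonal lam + Matrix.vecMulVec x (fun j => ε j * x j))).det)
      (fun z => ∑ l ∈ Finset.range (n + 1),
          (a l - ∑ j ∈ Finset.range (n - l),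
            a (j + 1 + l) * ∑ i, ε i * lam i ^ j * (x i) ^ 2) * z ^ l) (Set.range lam)ᶜ := by
    intro z hz
    have hne : ∀ i, z - lam i ≠ 0 := fun i h => hz ⟨i, by linarith⟩
    have hR : ∑ l ∈ Finset.range (n + 1),
          (a l - ∑ j ∈ Finset.range (n - l),
            a (j + 1 + l) * ∑ i, ε i * lam i ^ j * (x i) ^ 2) * z ^ l
        = (∏ i, (z - lam i)) - ∑ i, ε i * x i ^ 2 * ((∏ k, (z - lam k)) / (z - lam i)) := by
      have h2 : ∀ i, (∏ k, (z - lam k)) / (z - lam i) =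
          ∑ l ∈ Finset.range (n + 1), ∑ j ∈ Finset.range (n - l),
            a (j + 1 + l) * (lam i ^ j * z ^ l) := fun i => by
        rw [div_eq_iff (hne i)]
        exact aux_quot lam a ha i z
      simp only [h2]
      rw [ha z]
      simp only [sub_mul, Finset.sum_sub_distrib, Finset.mul_sum, Finset.sum_mul]
      congr 1
      rw [Finset.sum_comm (s := Finset.univ)]
      refine Finset.sum_congr rfl fun l _ => ?_
      rw [Finset.sum_comm (s := Finset.univ)]
      refine Finset.sum_congr rfl fun j _ => Finset.sum_congr rfl fun i _ => ?_
      ring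
    show _ = _
    simp only
    rw [hR]
    have hM : z • (1 : Matrix (Fin n) (Fin n) ℝ)
        - (Matrix.diagonal lam + Matrix.vecMulVec x (fun j => ε j * x j))
        = Matrix.diagonal (fun i => z - lam i) * (1 +
          Matrix.replicateCol Unit (fun i => -(x i / (z - lam i))) *
          Matrix.replicateRow Unit (fun j => ε j * x j)) := by
      ext i j
      have := hne i
      rw [Matrix.diagonal_mul]
      by_cases h : i = j
      · subst h
        simp [Matrix.vecMulVec, Matrix.mul_apply]
        field_simp
        ring
      · simp [Matrix.vecMulVec, Matrix.mul_apply, h]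
        field_simp
    rw [hM, Matrix.det_mul, Matrix.det_diagonal, Matrix.det_one_add_replicateCol_mul_replicateRow,
      mul_add, mul_one, sub_eq_add_neg, dotProduct, Finset.mul_sum, ← Finset.sum_neg_distrib]
    congr 1
    refine Finset.sum_congr rfl fun i _ => ?_
    ring
  have hd : Dense (Set.range lam)ᶜ := (Set.countable_range lam).dense_compl ℝ
  refine congrFun (Continuous.ext_on hd ?_ ?_ key)
  · exact Continuous.matrix_det (by fun_prop)
  · fun_prop
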